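/- For the 4n-parametric family of Lie brackets on ℝ^{4n}, the scalar curvature τ = Σ_{i=1}^{4n} ε_i ρ(X_i,X_i), where ρ(y,z) = Σ_{i=1}^{4n} ε_i R(X_i,y,z,X_i), R(x,y,z,u) = −¼ g([x,y],[z,u]) and ε_i = g(X_i,X_i), equals τ = −(3/2) Σ_{α=1}^{n} (λ_{4α−3}² + λ_{4α−2}² − λ_{4α−1}² − λ_{4α}²). -/

import Mathlib

noncomputable section

/-- The signature of the basis vectors inside each block: `(+, +, -, -)`. -/
def sgn : Fin 4 → ℝ := ![1, 1, -1, -1]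

/-- Structure constants of the bracket inside one block, depending on the four
parameters `l 0 = λ_1̄`, `l 1 = λ_2̄`, `l 2 = λ_3̄`, `l 3 = λ_4̄`:
`sc l r s` is the coordinate vector of `[X_r, X_s]`. -/
def sc (l : Fin 4 → ℝ) : Fin 4 → Fin 4 → Fin 4 → ℝ :=
  ![![![0, 0, 0, 0], ![0, 0, l 1, -l 0], ![0, l 1, 0, l 3], ![0, -l 0, -l 3, 0]],
    ![![0, 0, -l 1, l 0], ![0, 0, 0, 0], ![-l 1, 0, 0, -l 2], ![l 0, 0, l 2, 0]],
    ![![0, -l 1, 0, -l 3], ![l 1, 0, 0, l 2], ![0, 0, 0, 0], ![-l 3, l 2, 0, 0]],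
    ![![0, l 0, l 3, 0], ![-l 0, 0, -l 2, 0], ![l 3, -l 2, 0, 0], ![0, 0, 0, 0]]]

/-- `V n = ℝ^{4n}`, with coordinates indexed by a block `α : Fin n` and an
offset `r : Fin 4` (offset `r` corresponds to the basis vector `X_{4α+r+1}`,
i.e. `r = 0,1,2,3` correspond to `1̄,2̄,3̄,4̄`). -/
abbrev V (n : ℕ) : Type := Fin n × Fin 4 → ℝ

/-- The `4n`-parametric family of brackets on `ℝ^{4n}`: bilinear, vanishing on
pairs of basis vectors from different blocks, and given inside each block `α`
by the structure constants `sc` with parameters `λ_{4α+1},…,λ_{4α+4}`. -/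
def brk {n : ℕ} (lam : Fin n × Fin 4 → ℝ) (x y : V n) : V n := fun p =>
  ∑ r : Fin 4, ∑ s : Fin 4,
    x (p.1, r) * y (p.1, s) * sc (fun t => lam (p.1, t)) r s p.2

/-- The standard basis vectors `X_i` of `ℝ^{4n}`. -/
def X {n : ℕ} (i : Fin n × Fin 4) : V n := fun j => if j = i then 1 else 0

/-- The Norden metric `g`: the standard basis is orthogonal with
`g(X_1̄,X_1̄) = g(X_2̄,X_2̄) = 1`, `g(X_3̄,X_3̄) = g(X_4̄,X_4̄) = -1` in each block. -/
def gf {n : ℕ} (x y : V n) : ℝ := ∑ p : Fin n × Fin 4, sgn p.2 * x p * y p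

/-- The almost complex structure `J`: `J X_1̄ = X_3̄`, `J X_2̄ = X_4̄`,
`J X_3̄ = -X_1̄`, `J X_4̄ = -X_2̄` in each block. -/
def Jm {n : ℕ} (x : V n) : V n := fun p =>
  ![-x (p.1, 2), -x (p.1, 3), x (p.1, 0), x (p.1, 1)] p.2

/-- The curvature tensor `R(x,y,z,u) = −¼ g([x,y],[z,u])`. -/
def Rc {n : ℕ} (lam : Fin n × Fin 4 → ℝ) (x y z u : V n) : ℝ :=
  -(1 / 4) * gf (brk lam x y) (brk lam z u)

/-- The Ricci tensor `ρ(y,z) = Σ_i ε_i R(X_i,y,z,X_i)` with `ε_i = g(X_i,X_i)`. -/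
def ric {n : ℕ} (lam : Fin n × Fin 4 → ℝ) (y z : V n) : ℝ :=
  ∑ i : Fin n × Fin 4, sgn i.2 * Rc lam (X i) y z (X i)

/-!
Lowering the last index of the structure constants of one block with `g` gives a totally
antisymmetric tensor `φ`, and `φ` has one independent component for each `λ`: up to sign,
`λ_1̄, λ_2̄, λ_3̄, λ_4̄` are the components of `φ` omitting the indices `3̄, 4̄, 1̄, 2̄`. Since
`R(x,y,y,x) = ¼ g([x,y],[x,y])`, the scalar curvature is one quarter of the sum over the blocks of
the `g`-square norms of these tensors. In such a norm each component is counted `3! = 6` times,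
which produces the factor `6/4 = 3/2`.
-/

theorem sgn_mul_self (r : Fin 4) : sgn r * sgn r = 1 := by
  fin_cases r <;> simp [sgn]

section BlockTensor

/-- The structure constants of one block with the last index lowered by the metric, i.e. the
components `φ_{rst} = g([X_r, X_s], X_t)`. -/
def scLower (l : Fin 4 → ℝ) (r s t : Fin 4) : ℝ := sgn t * sc l r s t

variable (l : Fin 4 → ℝ) (r s t : Fin 4)

theorem scLower_sq : scLower l r s t ^ 2 = sc l r s t ^ 2 := by
  rw [scLower, mul_pow, sq (sgn t), sgn_mul_self, one_mul]

theorem sc_swap : sc l r s t = -sc l s r t := by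
  fin_cases r <;> fin_cases s <;> fin_cases t <;> simp [sc]

theorem scLower_swap_left : scLower l r s t = -scLower l s r t := by
  rw [scLower, scLower, sc_swap, mul_neg]

theorem scLower_swap_right : scLower l r s t = -scLower l r t s := by
  fin_cases r <;> fin_cases s <;> fin_cases t <;> simp [scLower, sgn, sc]

theorem scLower_self_left : scLower l r r t = 0 :=
  self_eq_neg.mp (scLower_swap_left l r r t)

end BlockTensor

theorem sum_fin_four_of_symm {M : Type*} [AddCommMonoid M] {f : Fin 4 → Fin 4 → Fin 4 → M}
    (swap_left : ∀ r s t, f r s t = f s r t) (swap_right : ∀ r s t, f r s t = f r t s)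
    (self_left : ∀ r t, f r r t = 0) :
    ∑ r, ∑ s, ∑ t, f r s t = 6 • (f 0 1 2 + f 0 1 3 + f 0 2 3 + f 1 2 3) := by
  have self_outer (r s : Fin 4) : f r s r = 0 := by rw [swap_right, self_left]
  have self_right (r s : Fin 4) : f r s s = 0 := by rw [swap_left, self_outer]
  have perm (r s t : Fin 4) :
      f r t s = f r s t ∧ f s r t = f r s t ∧ f s t r = f r s t ∧
        f t r s = f r s t ∧ f t s r = f r s t := by
    grind
  simp only [Fin.sum_univ_four, self_left, self_outer, self_right, perm 0 1 2, perm 0 1 3,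
    perm 0 2 3, perm 1 2 3]
  abel

theorem sum_sgn_mul_sc_sq (l : Fin 4 → ℝ) :
    ∑ r, ∑ s, ∑ t, sgn r * sgn s * sgn t * sc l r s t ^ 2 =
      -6 * (l 0 ^ 2 + l 1 ^ 2 - l 2 ^ 2 - l 3 ^ 2) := by
  simp only [← scLower_sq]
  rw [sum_fin_four_of_symm]
  · have component_012 : scLower l 0 1 2 = -l 1 := by simp [scLower, sgn, sc]
    have component_013 : scLower l 0 1 3 = l 0 := by simp [scLower, sgn, sc]
    have component_023 : scLower l 0 2 3 = -l 3 := by simp [scLower, sgn, sc]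
    have component_123 : scLower l 1 2 3 = l 2 := by simp [scLower, sgn, sc]
    rw [component_012, component_013, component_023, component_123]
    simp only [sgn, Matrix.cons_val]
    ring
  · intro r s t
    rw [scLower_swap_left, neg_sq, mul_comm (sgn r)]
  · intro r s t
    rw [scLower_swap_right, neg_sq, mul_right_comm (sgn r)]
  · intro r t
    rw [scLower_self_left, zero_pow two_ne_zero, mul_zero]

section Curvature

variable {n : ℕ} (lam : Fin n × Fin 4 → ℝ)

theorem brk_swap (x y : V n) : brk lam x y = -brk lam y x := by
  ext p
  simp only [brk, Pi.neg_apply, ← Finset.sum_neg_distrib]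
  rw [Finset.sum_comm]
  refine Finset.sum_congr rfl fun s _ => Finset.sum_congr rfl fun r _ => ?_
  rw [sc_swap]
  ring

theorem gf_neg_right (x y : V n) : gf x (-y) = -gf x y := by
  simp [gf]

theorem Rc_swap_self (x y : V n) :
    Rc lam x y y x = 1 / 4 * gf (brk lam x y) (brk lam x y) := by
  rw [Rc, brk_swap lam y x, gf_neg_right, neg_mul_neg]

theorem brk_X_X_apply (i j p : Fin n × Fin 4) :
    brk lam (X i) (X j) p =
      if p.1 = i.1 ∧ p.1 = j.1 then sc (fun t => lam (p.1, t)) i.2 j.2 p.2 else 0 := by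
  by_cases hi : p.1 = i.1
  · simp [brk, X, Prod.ext_iff, ite_and, hi]
  · simp [brk, X, Prod.ext_iff, hi]

theorem brk_X_X_of_fst_ne {i j : Fin n × Fin 4} (h : i.1 ≠ j.1) : brk lam (X i) (X j) = 0 := by
  ext p
  rw [brk_X_X_apply, if_neg fun hp => h (hp.1.symm.trans hp.2), Pi.zero_apply]

theorem gf_brk_X_X_self (a b : Fin n) (r s : Fin 4) :
    gf (brk lam (X (a, r)) (X (b, s))) (brk lam (X (a, r)) (X (b, s))) =
      if a = b then ∑ t, sgn t * sc (fun u => lam (b, u)) r s t ^ 2 else 0 := by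
  by_cases h : a = b
  · subst h
    simp [gf, Fintype.sum_prod_type_right, brk_X_X_apply, mul_assoc, sq]
  · simp [brk_X_X_of_fst_ne lam (i := (a, r)) (j := (b, s)) h, gf, h]

theorem ric_X_self (b : Fin n) (s : Fin 4) :
    ric lam (X (b, s)) (X (b, s)) =
      1 / 4 * ∑ r, ∑ t, sgn r * sgn t * sc (fun u => lam (b, u)) r s t ^ 2 := by
  simp only [ric, Rc_swap_self, Fintype.sum_prod_type_right, gf_brk_X_X_self, mul_ite, mul_zero,
    Finset.sum_ite_eq', Finset.mem_univ, if_true, Finset.mul_sum]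
  refine Finset.sum_congr rfl fun r _ => Finset.sum_congr rfl fun t _ => ?_
  ring

end Curvature

/-- the scalar curvature `τ = Σ_i ε_i ρ(X_i,X_i)` equals
`−(3/2) Σ_α (λ_{4α−3}² + λ_{4α−2}² − λ_{4α−1}² − λ_{4α}²)`. -/
theorem scalar_curvature {n : ℕ} (hn : 1 ≤ n) (lam : Fin n × Fin 4 → ℝ) :
    ∑ i : Fin n × Fin 4, sgn i.2 * ric lam (X i) (X i) =
      -(3 / 2) * ∑ α : Fin n,
        (lam (α, 0) ^ 2 + lam (α, 1) ^ 2 - lam (α, 2) ^ 2 - lam (α, 3) ^ 2) := by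
  rw [Fintype.sum_prod_type, Finset.mul_sum]
  refine Finset.sum_congr rfl fun α _ => ?_
  let l : Fin 4 → ℝ := fun u => lam (α, u)
  calc ∑ s, sgn s * ric lam (X (α, s)) (X (α, s))
    _ = 1 / 4 * ∑ r, ∑ s, ∑ t, sgn r * sgn s * sgn t * sc l r s t ^ 2 := by
      simp only [ric_X_self, Finset.mul_sum]
      rw [Finset.sum_comm]
      refine Finset.sum_congr rfl fun r _ => Finset.sum_congr rfl fun s _ =>
        Finset.sum_congr rfl fun t _ => ?_
      ring
    _ = 1 / 4 * (-6 * (l 0 ^ 2 + l 1 ^ 2 - l 2 ^ 2 - l 3 ^ 2)) := by rw [sum_sgn_mul_sc_sq]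
    _ = -(3 / 2) * (lam (α, 0) ^ 2 + lam (α, 1) ^ 2 - lam (α, 2) ^ 2 - lam (α, 3) ^ 2) := by ring
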